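/- arXiv:2401.15437 — 2 statements merged into one kernel-verified Lean document; each statement's English description precedes it below -/
import Mathlib

section
/- Let n ≥ 3 be an integer and let ε = 0 if n is odd and ε = 1 if n is even. Then the width w(n,2) of the Bruhat order of A(n,2) satisfies w(n,2) ≥ |A(n,2)| / (2n(n−2) + ε). -/
/-!
The inversion number `ν` is strictly increasing for the Bruhat order, so the matrices of a class
with a given value of `ν` form an antichain, and the largest level of `ν` has at least the average
size. It remains to bound the number of values of `ν` on `A(n,k)`.

Upper and lower bounds for `ν` mirror each other because the sum of `ν` at a matrix and at its
conjugate is constant on the class: it counts the pairs of ones in different rows and different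
columns. For the lower bound, let a one in position `(i,j)` belong to no inversion. Counting the
ones before row `i` and before column `j` shows that `k (j - i)` is the number of ones to its left
minus the number of ones above it, which is less than `k` in absolute value; hence `i = j`. So each
of the at least `n (k - 1)` ones off the diagonal is in an inversion, and `n (k - 1) ≤ 2 ν(A)`.
-/

open Finset

/-- A matrix of zeros and ones. -/
def ZeroOne {m n : ℕ} (A : Matrix (Fin m) (Fin n) ℕ) : Prop :=
  ∀ i j, A i j = 0 ∨ A i j = 1

/-- Sum of the entries of row `i`. -/
def rowSum {m n : ℕ} (A : Matrix (Fin m) (Fin n) ℕ) (i : Fin m) : ℕ :=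
  ∑ j, A i j

/-- Sum of the entries of column `j`. -/
def colSum {m n : ℕ} (A : Matrix (Fin m) (Fin n) ℕ) (j : Fin n) : ℕ :=
  ∑ i, A i j

/-- The class `A(R,S)` of (0,1)-matrices with row sum vector `R` and
column sum vector `S`. -/
def classRS {m n : ℕ} (R : Fin m → ℕ) (S : Fin n → ℕ) :
    Set (Matrix (Fin m) (Fin n) ℕ) :=
  {A | ZeroOne A ∧ (∀ i, rowSum A i = R i) ∧ (∀ j, colSum A j = S j)}

/-- The class `A(n,k)` of square (0,1)-matrices of order `n` with all row
and column sums equal to `k`. -/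
def classA (n k : ℕ) : Set (Matrix (Fin n) (Fin n) ℕ) :=
  classRS (fun _ => k) (fun _ => k)

/-- `sigmaM A i j` is the sum of the entries of the leading submatrix of `A`
on rows `0,…,i` and columns `0,…,j` (0-based), i.e. `σ_{i+1,j+1}(A)` in
1-based notation. -/
def sigmaM {m n : ℕ} (A : Matrix (Fin m) (Fin n) ℕ) (i : Fin m) (j : Fin n) : ℕ :=
  ∑ k ∈ Finset.univ.filter (fun k : Fin m => k ≤ i),
    ∑ l ∈ Finset.univ.filter (fun l : Fin n => l ≤ j), A k l

/-- The Bruhat order: `A ⪯_B C` iff `σ_{ij}(A) ≥ σ_{ij}(C)` for all `i, j`. -/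
def brle {m n : ℕ} (A C : Matrix (Fin m) (Fin n) ℕ) : Prop :=
  ∀ i j, sigmaM C i j ≤ sigmaM A i j

/-- Incomparability in the Bruhat order. -/
def Incomp {m n : ℕ} (A C : Matrix (Fin m) (Fin n) ℕ) : Prop :=
  ¬ brle A C ∧ ¬ brle C A

/-- A set of matrices that is an antichain in the Bruhat order. -/
def IsAntichainB {m n : ℕ} (D : Set (Matrix (Fin m) (Fin n) ℕ)) : Prop :=
  ∀ A ∈ D, ∀ C ∈ D, A ≠ C → Incomp A C

/-- The number of inversions of a (0,1)-matrix: pairs of `1` entries, one of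
which is strictly to the top-right of the other (each unordered pair counted
once, via the representative whose first member is in the lower-indexed row). -/
def nu {m n : ℕ} (A : Matrix (Fin m) (Fin n) ℕ) : ℕ :=
  (Finset.univ.filter (fun p : (Fin m × Fin n) × (Fin m × Fin n) =>
      p.1.1 < p.2.1 ∧ p.2.2 < p.1.2 ∧ A p.1.1 p.1.2 = 1 ∧ A p.2.1 p.2.2 = 1)).card

/-- The conjugate of a matrix: columns in reversed (left-right flipped) order. -/
def conjM {m n : ℕ} (A : Matrix (Fin m) (Fin n) ℕ) : Matrix (Fin m) (Fin n) ℕ :=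
  Matrix.of fun i j => A i j.rev

lemma exists_ne_and_forall_lt_eq {ι α : Type*} [Preorder ι] [WellFoundedLT ι] {f g : ι → α}
    (h : f ≠ g) :
    ∃ i, f i ≠ g i ∧ ∀ k < i, f k = g k := by
  obtain ⟨i, hi, hmin⟩ := exists_minimal_of_wellFoundedLT _ (Function.ne_iff.1 h)
  exact ⟨i, hi, fun k hk => not_not.1 fun hne => hk.not_ge (hmin hne hk.le)⟩

section LinearOrder

variable {ι : Type*} [LinearOrder ι]

lemma eq_empty_or_eq_Iic_of_isLowerSet [LocallyFiniteOrderBot ι] {s : Finset ι}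
    (hs : IsLowerSet (s : Set ι)) : s = ∅ ∨ ∃ i, s = Iic i := by
  refine s.eq_empty_or_nonempty.imp_right fun hne => ⟨s.max' hne, ?_⟩
  ext i
  exact ⟨fun hi => mem_Iic.2 (s.le_max' i hi), fun hi => hs (mem_Iic.1 hi) (s.max'_mem hne)⟩

variable [Fintype ι] [LocallyFiniteOrderTop ι]

lemma finset_compl_Iic [LocallyFiniteOrderBot ι] (i : ι) : (Iic i)ᶜ = Ioi i := by
  ext
  simp

lemma sum_eq_sum_Iio_add_add_sum_Ioi [LocallyFiniteOrderBot ι] {M : Type*} [AddCommMonoid M]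
    (f : ι → M) (i : ι) : ∑ k, f k = ∑ k ∈ Iio i, f k + f i + ∑ k ∈ Ioi i, f k := by
  rw [Fintype.sum_eq_add_sum_compl i, ← Ioi_disjUnion_Iio, sum_disjUnion]
  ac_rfl

lemma two_mul_sum_mul_sum_Ioi_add_sum_sq [LocallyFiniteOrderBot ι] {R : Type*} [CommSemiring R]
    (x : ι → R) :
    2 * ∑ i, x i * ∑ k ∈ Ioi i, x k + ∑ i, x i ^ 2 = (∑ i, x i) ^ 2 := by
  calc 2 * ∑ i, x i * ∑ k ∈ Ioi i, x k + ∑ i, x i ^ 2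
      = ∑ i, ∑ k ∈ Ioi i, (x k * x i + x i * x k) + ∑ i, x i ^ 2 := by
        simp only [mul_sum, mul_comm (x _) (x _), ← two_mul]
    _ = ∑ i, (x i * x i + ∑ k ∈ {i}ᶜ, x k * x i) := by
        rw [sum_sum_Ioi_add_eq_sum_sum_off_diag fun i k => x i * x k, add_comm,
          ← sum_add_distrib]
        simp only [sq]
    _ = ∑ i, ∑ k, x k * x i :=
        sum_congr rfl fun i _ => (Fintype.sum_eq_add_sum_compl i fun k => x k * x i).symm
    _ = (∑ i, x i) ^ 2 := by rw [sum_comm, sq, sum_mul_sum]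

lemma sum_mul_sum_Ioi_eq_choose_two [LocallyFiniteOrderBot ι] {x : ι → ℕ}
    (hx : ∀ i, x i = 0 ∨ x i = 1) :
    ∑ i, x i * ∑ k ∈ Ioi i, x k = (∑ i, x i).choose 2 := by
  have hsq : ∑ i, x i ^ 2 = ∑ i, x i :=
    sum_congr rfl fun i _ => by rcases hx i with h | h <;> simp [h]
  have hpairs := two_mul_sum_mul_sum_Ioi_add_sum_sq x
  rw [Nat.choose_two_right]
  refine (Nat.div_eq_of_eq_mul_right two_pos ?_).symm
  rw [Nat.mul_sub_one, ← sq, ← hpairs, hsq, Nat.add_sub_cancel]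

end LinearOrder

/-- The sum of the entries of `A` in the rows `s` and the columns `t`. With initial segments for `s`
and `t` this is `σ`; the quadrants around a position `(i, j)` give the ones with which a one at
`(i, j)` forms an inversion. -/
def blockSum {m n : ℕ} (A : Matrix (Fin m) (Fin n) ℕ) (s : Finset (Fin m)) (t : Finset (Fin n)) :
    ℕ :=
  ∑ i ∈ s, ∑ j ∈ t, A i j

/-- The bilinear form whose diagonal values `invForm A A` are the inversion numbers `nu A` of
(0,1)-matrices: the entries of `A` are weighted by the entries of `B` to their lower left. -/
def invForm {m n : ℕ} (A B : Matrix (Fin m) (Fin n) ℕ) : ℕ :=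
  ∑ i, ∑ j, A i j * blockSum B (Ioi i) (Iio j)

section BlockSum

variable {m n : ℕ} (A : Matrix (Fin m) (Fin n) ℕ) (s : Finset (Fin m)) (t : Finset (Fin n))

lemma sigmaM_eq_blockSum (i : Fin m) (j : Fin n) : sigmaM A i j = blockSum A (Iic i) (Iic j) := by
  simp only [sigmaM, blockSum, filter_ge_eq_Iic]

lemma blockSum_univ_left : blockSum A univ t = ∑ j ∈ t, colSum A j :=
  sum_comm

lemma blockSum_univ_right : blockSum A s univ = ∑ i ∈ s, rowSum A i :=
  rfl

lemma blockSum_add_blockSum_compl_left :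
    blockSum A s t + blockSum A sᶜ t = ∑ j ∈ t, colSum A j := by
  rw [← blockSum_univ_left]
  exact sum_add_sum_compl s _

lemma blockSum_add_blockSum_compl_right :
    blockSum A s t + blockSum A s tᶜ = ∑ i ∈ s, rowSum A i := by
  rw [← blockSum_univ_right]
  simp only [blockSum, ← sum_add_distrib, sum_add_sum_compl]

lemma blockSum_univ_left_eq_add (i : Fin m) :
    blockSum A univ t = blockSum A (Iio i) t + blockSum A {i} t + blockSum A (Ioi i) t := by
  simp only [blockSum, sum_singleton, sum_eq_sum_Iio_add_add_sum_Ioi (fun k => ∑ l ∈ t, A k l) i]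

lemma blockSum_univ_right_eq_add (j : Fin n) :
    blockSum A s univ = blockSum A s (Iio j) + blockSum A s {j} + blockSum A s (Ioi j) := by
  simp only [blockSum, sum_singleton, sum_eq_sum_Iio_add_add_sum_Ioi _ j, sum_add_distrib]

lemma rowSum_eq_add (i : Fin m) (j : Fin n) :
    rowSum A i = blockSum A {i} (Iio j) + A i j + blockSum A {i} (Ioi j) := by
  simpa [blockSum, rowSum] using blockSum_univ_right_eq_add A {i} j

lemma colSum_eq_add (i : Fin m) (j : Fin n) :
    colSum A j = blockSum A (Iio i) {j} + A i j + blockSum A (Ioi i) {j} := by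
  simpa [blockSum, colSum] using blockSum_univ_left_eq_add A {j} i

lemma blockSum_conjM_Iio_rev (j : Fin n) :
    blockSum (conjM A) s (Iio j.rev) = blockSum A s (Ioi j) := by
  simp [blockSum, conjM, ← Fin.map_revPerm_Ioi]

end BlockSum

section Inversions

variable {m n : ℕ}

lemma invForm_eq_sum_upperRight (A B : Matrix (Fin m) (Fin n) ℕ) :
    invForm A B = ∑ k, ∑ l, B k l * blockSum A (Iio k) (Ioi l) := by
  simp only [invForm, blockSum, mul_sum, ← sum_product', univ_product_univ]
  rw [sum_comm' (t' := univ) (s' := fun q => Iio q.1 ×ˢ Ioi q.2) (by simp)]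
  simp only [mul_comm]

lemma nu_eq_invForm {A : Matrix (Fin m) (Fin n) ℕ} (hA : ZeroOne A) : nu A = invForm A A := by
  rw [nu, card_filter, Fintype.sum_prod_type, Fintype.sum_prod_type, invForm]
  refine sum_congr rfl fun i _ => sum_congr rfl fun j _ => ?_
  have hquadrant : Ioi i ×ˢ Iio j = univ.filter fun q : Fin m × Fin n => i < q.1 ∧ q.2 < j := by
    ext q
    simp
  simp only [blockSum, ← sum_product', mul_sum, hquadrant, sum_filter]
  refine sum_congr rfl fun q _ => ?_
  rcases hA i j with hij | hij <;> rcases hA q.1 q.2 with hq | hq <;> simp [hij, hq]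

lemma conjM_mem_classRS {A : Matrix (Fin m) (Fin n) ℕ} {R : Fin m → ℕ} {S : Fin n → ℕ}
    (hA : A ∈ classRS R S) : conjM A ∈ classRS R (S ∘ Fin.rev) :=
  ⟨fun i j => hA.1 i j.rev,
    fun i => (Equiv.sum_comp Fin.revPerm fun j => A i j).trans (hA.2.1 i), fun j => hA.2.2 j.rev⟩

lemma nu_conjM {A : Matrix (Fin m) (Fin n) ℕ} (hA : ZeroOne A) :
    nu (conjM A) = ∑ i, ∑ j, A i j * blockSum A (Ioi i) (Ioi j) := by
  have hconj : ZeroOne (conjM A) := fun i j => hA i j.rev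
  rw [nu_eq_invForm hconj, invForm]
  refine sum_congr rfl fun i _ => ?_
  rw [← Equiv.sum_comp Fin.revPerm]
  simp only [Fin.revPerm_apply, blockSum_conjM_Iio_rev]
  simp [conjM]

lemma nu_add_nu_conjM {A : Matrix (Fin m) (Fin n) ℕ} {R : Fin m → ℕ} {S : Fin n → ℕ}
    (hA : A ∈ classRS R S) :
    nu A + nu (conjM A) + ∑ j, (S j).choose 2 = ∑ i, R i * ∑ k ∈ Ioi i, R k := by
  obtain ⟨hzo, hR, hS⟩ := hA
  have hcol : ∑ j, (S j).choose 2 = ∑ i, ∑ j, A i j * blockSum A (Ioi i) {j} := by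
    rw [sum_comm]
    refine sum_congr rfl fun j _ => ?_
    simp only [← hS j, colSum, ← sum_mul_sum_Ioi_eq_choose_two fun i => hzo i j, blockSum,
      sum_singleton]
  calc nu A + nu (conjM A) + ∑ j, (S j).choose 2
      = ∑ i, ∑ j, A i j * blockSum A (Ioi i) univ := by
        simp only [nu_eq_invForm hzo, nu_conjM hzo, hcol, invForm, ← sum_add_distrib, ← mul_add]
        refine sum_congr rfl fun i _ => sum_congr rfl fun j _ => ?_
        rw [blockSum_univ_right_eq_add A (Ioi i) j, add_right_comm]
    _ = ∑ i, R i * ∑ k ∈ Ioi i, R k := by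
        simp only [blockSum_univ_right, ← hR, ← sum_mul]
        rfl

end Inversions

section BruhatOrder

variable {m n : ℕ} {A C : Matrix (Fin m) (Fin n) ℕ} {s : Finset (Fin m)} {t : Finset (Fin n)}

lemma brle.blockSum_le (h : brle A C) (hs : IsLowerSet (s : Set (Fin m)))
    (ht : IsLowerSet (t : Set (Fin n))) : blockSum C s t ≤ blockSum A s t := by
  rcases eq_empty_or_eq_Iic_of_isLowerSet hs with rfl | ⟨i, rfl⟩
  · simp [blockSum]
  rcases eq_empty_or_eq_Iic_of_isLowerSet ht with rfl | ⟨j, rfl⟩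
  · simp [blockSum]
  simpa only [sigmaM_eq_blockSum] using h i j

lemma brle.blockSum_compl_left_le (h : brle A C) (hcol : ∀ j, colSum A j = colSum C j)
    (hs : IsLowerSet (s : Set (Fin m))) (ht : IsLowerSet (t : Set (Fin n))) :
    blockSum A sᶜ t ≤ blockSum C sᶜ t := by
  have hA := blockSum_add_blockSum_compl_left A s t
  have hC := blockSum_add_blockSum_compl_left C s t
  have hle := h.blockSum_le hs ht
  simp only [hcol] at hA
  lia

lemma brle.blockSum_compl_right_le (h : brle A C) (hrow : ∀ i, rowSum A i = rowSum C i)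
    (hs : IsLowerSet (s : Set (Fin m))) (ht : IsLowerSet (t : Set (Fin n))) :
    blockSum A s tᶜ ≤ blockSum C s tᶜ := by
  have hA := blockSum_add_blockSum_compl_right A s t
  have hC := blockSum_add_blockSum_compl_right C s t
  have hle := h.blockSum_le hs ht
  simp only [hrow] at hA
  lia

lemma brle.blockSum_lowerLeft_le (h : brle A C) (hcol : ∀ j, colSum A j = colSum C j)
    (i : Fin m) (j : Fin n) : blockSum A (Ioi i) (Iio j) ≤ blockSum C (Ioi i) (Iio j) := by
  rw [← finset_compl_Iic]
  exact h.blockSum_compl_left_le hcol (by simpa using isLowerSet_Iic i)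
    (by simpa using isLowerSet_Iio j)

lemma brle.blockSum_upperRight_le (h : brle A C) (hrow : ∀ i, rowSum A i = rowSum C i)
    (i : Fin m) (j : Fin n) : blockSum A (Iio i) (Ioi j) ≤ blockSum C (Iio i) (Ioi j) := by
  rw [← finset_compl_Iic]
  exact h.blockSum_compl_right_le hrow (by simpa using isLowerSet_Iio i)
    (by simpa using isLowerSet_Iic j)

lemma brle.exists_pos_and_blockSum_lowerLeft_lt (h : brle A C)
    (hrow : ∀ i, rowSum A i = rowSum C i) (hcol : ∀ j, colSum A j = colSum C j) (hne : A ≠ C) :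
    ∃ i j, 0 < C i j ∧ blockSum A (Ioi i) (Iio j) < blockSum C (Ioi i) (Iio j) := by
  obtain ⟨i, hi, habove⟩ := exists_ne_and_forall_lt_eq hne
  obtain ⟨j, hj, hright⟩ : ∃ j, A i j ≠ C i j ∧ ∀ l, j < l → A i l = C i l :=
    exists_ne_and_forall_lt_eq (ι := (Fin n)ᵒᵈ) hi
  have hIio : blockSum A (Iio i) (Iio j) = blockSum C (Iio i) (Iio j) :=
    sum_congr rfl fun k hk => by rw [habove k (mem_Iio.1 hk)]
  have hIoi : blockSum A {i} (Ioi j) = blockSum C {i} (Ioi j) := by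
    simp only [blockSum, sum_singleton]
    exact sum_congr rfl fun l hl => hright l (mem_Ioi.1 hl)
  -- The rows `i` agree to the right of `j` and have equal sums, so their difference in column `j`
  -- is compensated to the left of `j`, where the Bruhat order prescribes its sign.
  have hrowi : blockSum A {i} (Iio j) + A i j = blockSum C {i} (Iio j) + C i j := by
    have := hrow i
    rw [rowSum_eq_add A i j, rowSum_eq_add C i j] at this
    lia
  have hcols : blockSum A univ (Iio j) = blockSum C univ (Iio j) := by
    simp only [blockSum_univ_left, hcol]
  rw [blockSum_univ_left_eq_add A _ i, blockSum_univ_left_eq_add C _ i] at hcols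
  have hle := h.blockSum_lowerLeft_le hcol i j
  exact ⟨i, j, by lia, by lia⟩

lemma brle.invForm_lt (h : brle A C) (hrow : ∀ i, rowSum A i = rowSum C i)
    (hcol : ∀ j, colSum A j = colSum C j) (hne : A ≠ C) : invForm A A < invForm C C := by
  obtain ⟨i, j, hpos, hlt⟩ := h.exists_pos_and_blockSum_lowerLeft_lt hrow hcol hne
  have hle (k l) := Nat.mul_le_mul_left (C k l) (h.blockSum_lowerLeft_le hcol k l)
  calc invForm A A = ∑ k, ∑ l, A k l * blockSum A (Iio k) (Ioi l) := invForm_eq_sum_upperRight A A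
    _ ≤ ∑ k, ∑ l, A k l * blockSum C (Iio k) (Ioi l) := by
        gcongr with k _ l
        exact h.blockSum_upperRight_le hrow k l
    _ = invForm C A := (invForm_eq_sum_upperRight C A).symm
    _ < invForm C C :=
        sum_lt_sum (fun k _ => sum_le_sum fun l _ => hle k l)
          ⟨i, mem_univ i, sum_lt_sum (fun l _ => hle i l)
            ⟨j, mem_univ j, Nat.mul_lt_mul_of_pos_left hlt hpos⟩⟩

variable {R : Fin m → ℕ} {S : Fin n → ℕ}

lemma brle.nu_lt (h : brle A C) (hA : A ∈ classRS R S) (hC : C ∈ classRS R S) (hne : A ≠ C) :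
    nu A < nu C := by
  rw [nu_eq_invForm hA.1, nu_eq_invForm hC.1]
  exact h.invForm_lt (fun i => (hA.2.1 i).trans (hC.2.1 i).symm)
    (fun j => (hA.2.2 j).trans (hC.2.2 j).symm) hne

lemma isAntichainB_of_nu_eq {D : Set (Matrix (Fin m) (Fin n) ℕ)} (hD : D ⊆ classRS R S)
    (hnu : ∀ A ∈ D, ∀ C ∈ D, nu A = nu C) : IsAntichainB D :=
  fun A hA C hC hne => ⟨fun h => (h.nu_lt (hD hA) (hD hC) hne).ne (hnu A hA C hC),
    fun h => (h.nu_lt (hD hC) (hD hA) hne.symm).ne (hnu C hC A hA)⟩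

lemma classRS_finite (R : Fin m → ℕ) (S : Fin n → ℕ) : (classRS R S).Finite :=
  (Set.Finite.pi' fun _ => Set.Finite.pi' fun _ => Set.toFinite {0, 1}).subset
    fun _ hA => hA.1

lemma exists_isAntichainB_ncard_le_mul {a b : ℤ} (h : ∀ A ∈ classRS R S, (nu A : ℤ) ∈ Icc a b) :
    ∃ D ⊆ classRS R S, IsAntichainB D ∧ ((classRS R S).ncard : ℤ) ≤ (b + 1 - a) * D.ncard := by
  rcases (classRS R S).eq_empty_or_nonempty with hempty | ⟨A, hA⟩
  · exact ⟨∅, Set.empty_subset _, fun _ hA => hA.elim, by simp [hempty]⟩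
  have hfin := classRS_finite R S
  have hmaps : ∀ C ∈ hfin.toFinset, (nu C : ℤ) ∈ Icc a b := by simpa using h
  obtain ⟨v, -, hmax⟩ := exists_max_image (Icc a b)
    (fun v => #{C ∈ hfin.toFinset | (nu C : ℤ) = v}) ⟨_, h A hA⟩
  have hcard := card_le_mul_card_image_of_maps_to hmaps _ hmax
  have hab : a ≤ b + 1 := by
    have := mem_Icc.1 (h A hA)
    lia
  let D : Set (Matrix (Fin m) (Fin n) ℕ) := {C ∈ classRS R S | (nu C : ℤ) = v}
  have hD : D.ncard = #{C ∈ hfin.toFinset | (nu C : ℤ) = v} := by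
    rw [← Set.ncard_coe_finset]
    simp [D]
  refine ⟨D, fun C hC => hC.1, isAntichainB_of_nu_eq (fun C hC => hC.1) fun B hB C hC => ?_, ?_⟩
  · exact_mod_cast hB.2.trans hC.2.symm
  · rw [Set.ncard_eq_toFinset_card _ hfin, hD, ← Int.toNat_of_nonneg (sub_nonneg.2 hab)]
    rw [Int.card_Icc, mul_comm] at hcard
    exact_mod_cast hcard

end BruhatOrder

section RegularMatrices

variable {n k : ℕ} {A : Matrix (Fin n) (Fin n) ℕ}

lemma eq_of_pos_of_blockSum_eq_zero (hrow : ∀ i, rowSum A i = k) (hcol : ∀ j, colSum A j = k)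
    {i j : Fin n} (hpos : 0 < A i j) (hLL : blockSum A (Ioi i) (Iio j) = 0)
    (hUR : blockSum A (Iio i) (Ioi j) = 0) : i = j := by
  have hrows : blockSum A (Iio i) univ = i * k := by simp [blockSum_univ_right, hrow]
  have hcols : blockSum A univ (Iio j) = j * k := by simp [blockSum_univ_left, hcol]
  have hleft : blockSum A {i} (Iio j) < k := by
    rw [← hrow i, rowSum_eq_add A i j]
    lia
  have habove : blockSum A (Iio i) {j} < k := by
    rw [← hcol j, colSum_eq_add A i j]
    lia
  rw [blockSum_univ_right_eq_add A _ j, hUR] at hrows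
  rw [blockSum_univ_left_eq_add A _ i, hLL] at hcols
  have hij : (i : ℕ) * k < (j + 1) * k := by lia
  have hji : (j : ℕ) * k < (i + 1) * k := by lia
  have := lt_of_mul_lt_mul_right hij k.zero_le
  have := lt_of_mul_lt_mul_right hji k.zero_le
  lia

lemma mul_le_two_mul_invForm_add_trace (hrow : ∀ i, rowSum A i = k) (hcol : ∀ j, colSum A j = k) :
    n * k ≤ 2 * invForm A A + A.trace := by
  have hentry (i j) : A i j ≤ A i j * blockSum A (Ioi i) (Iio j)
      + A i j * blockSum A (Iio i) (Ioi j) + if i = j then A i j else 0 := by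
    rcases (A i j).eq_zero_or_pos with h0 | hpos
    · simp [h0]
    split_ifs with hij
    · exact Nat.le_add_left _ _
    rw [add_zero, ← mul_add]
    refine Nat.le_mul_of_pos_right _ (Nat.pos_of_ne_zero fun hzero => hij ?_)
    exact eq_of_pos_of_blockSum_eq_zero hrow hcol hpos (by lia) (by lia)
  calc n * k = ∑ i, rowSum A i := by simp [hrow]
    _ ≤ ∑ i, ∑ j, (A i j * blockSum A (Ioi i) (Iio j) + A i j * blockSum A (Iio i) (Ioi j)
          + if i = j then A i j else 0) :=
        sum_le_sum fun i _ => sum_le_sum fun j _ => hentry i j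
    _ = 2 * invForm A A + A.trace := by
        rw [two_mul]
        nth_rw 2 [invForm_eq_sum_upperRight]
        simp [invForm, sum_add_distrib, Matrix.trace]

lemma mul_le_two_mul_nu_add (hA : A ∈ classA n k) : n * k ≤ 2 * nu A + n := by
  have htrace : A.trace ≤ n := by
    have hdiag (i) : A i i ≤ 1 := by rcases hA.1 i i with h | h <;> simp [h]
    simpa [Matrix.trace] using sum_le_sum fun i (_ : i ∈ univ) => hdiag i
  rw [nu_eq_invForm hA.1]
  exact (mul_le_two_mul_invForm_add_trace hA.2.1 hA.2.2).trans (by lia)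

lemma nu_add_nu_conjM_add_mul_choose_two (hA : A ∈ classA n k) :
    nu A + nu (conjM A) + n * k.choose 2 = n.choose 2 * k ^ 2 := by
  have hpairs : ∑ i : Fin n, #(Ioi i) = n.choose 2 := by
    simpa using sum_mul_sum_Ioi_eq_choose_two (x := fun _ : Fin n => 1) (by simp)
  rw [← smul_eq_mul n, ← Fin.sum_const, nu_add_nu_conjM hA]
  simp only [sum_const, smul_eq_mul, ← mul_sum, ← sum_mul, hpairs]
  ring

lemma nu_mem_Icc (hA : A ∈ classA n k) {a : ℤ} (ha : 2 * a ≤ n * k - n + 1) :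
    (nu A : ℤ) ∈ Icc a (n.choose 2 * k ^ 2 - n * k.choose 2 - a) := by
  have hlow := mul_le_two_mul_nu_add hA
  have hlow_conj := mul_le_two_mul_nu_add (conjM_mem_classRS hA)
  have htotal := nu_add_nu_conjM_add_mul_choose_two hA
  zify at hlow hlow_conj htotal
  rw [mem_Icc]
  constructor <;> lia

theorem width_lower_bound_average_general (n k : ℕ) :
    ∃ D ⊆ classA n k, IsAntichainB D ∧
      ((classA n k).ncard : ℚ)
        ≤ (n * (k ^ 2 * (n - 2) - k + 2) / 2 + if Even (n * (k + 1)) then 1 else 0) * D.ncard := by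
  -- `a` is `n (k - 1) / 2` rounded up; `n (k + 1)` has the parity of `n (k - 1)` but no truncation.
  obtain ⟨a, ha⟩ : ∃ a : ℤ, 2 * a + (if Even (n * (k + 1)) then 1 else 0) = n * k - n + 1 := by
    split_ifs with hpar
    · obtain ⟨c, hc⟩ := hpar
      refine ⟨c - n, ?_⟩
      zify at hc
      linear_combination -hc
    · obtain ⟨c, hc⟩ := Nat.not_even_iff_odd.1 hpar
      refine ⟨c + 1 - n, ?_⟩
      zify at hc
      linear_combination -hc
  obtain ⟨D, hD, hanti, hcard⟩ := exists_isAntichainB_ncard_le_mul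
    fun A (hA : A ∈ classA n k) => nu_mem_Icc hA (by lia : 2 * a ≤ n * k - n + 1)
  refine ⟨D, hD, hanti, ?_⟩
  have hcount : (n * (k ^ 2 * (n - 2) - k + 2) / 2 + if Even (n * (k + 1)) then 1 else 0)
      = ((n.choose 2 * k ^ 2 - n * k.choose 2 - a + 1 - a : ℤ) : ℚ) := by
    have ha' : (2 * a + (if Even (n * (k + 1)) then 1 else 0) : ℚ) = n * k - n + 1 := by
      exact_mod_cast ha
    push_cast [Nat.cast_choose_two]
    linear_combination ha'
  rw [hcount]
  exact_mod_cast hcard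

end RegularMatrices

/-- For `n ≥ 3`, with `ε = 0` if `n` is odd and `ε = 1` if `n`
is even, the width of the Bruhat order of `A(n,2)` is at least
`|A(n,2)| / (2n(n−2) + ε)`: there is an antichain at least that large. -/
theorem width_lower_bound_average (n : ℕ) (hn : 3 ≤ n) :
    ∃ D : Set (Matrix (Fin n) (Fin n) ℕ), D ⊆ classA n 2 ∧ IsAntichainB D ∧
      ((classA n 2).ncard : ℚ) / ((2*n*(n-2) + if Even n then 1 else 0 : ℕ) : ℚ)
        ≤ (D.ncard : ℚ) := by
  obtain ⟨D, hD, hanti, hcard⟩ := width_lower_bound_average_general n 2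
  refine ⟨D, hD, hanti, div_le_of_le_mul₀ (by positivity) (by positivity) (hcard.trans_eq ?_)⟩
  simp only [Nat.even_mul, show ¬Even (2 + 1) by decide, or_false]
  push_cast [Nat.cast_sub (by lia : 2 ≤ n)]
  ring
end

section
/- The width of the Bruhat order of A(4,2) equals 13; that is, the maximum cardinality of a set of pairwise incomparable matrices in A(4,2) is 13. -/
open Finset

/-!
The partial sums `σ_ij` determine a matrix, so their total `∑ σ_ij` decreases strictly along the
Bruhat order, and the matrices with a given total form an antichain. Exactly `13` matrices of
`A(4,2)` have total `48`. Conversely, `A(4,2)` is a union of `13` chains, and an antichain meets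
each chain at most once.
-/

section Antichain

variable {α ι : Type*} {r : α → α → Prop} {s : Set α}

theorem ncard_le_card_of_isAntichain_of_subset_iUnion_isChain [Finite ι] {C : ι → Set α}
    (hs : IsAntichain r s) (hC : ∀ i, IsChain r (C i)) (hsC : s ⊆ ⋃ i, C i) :
    s.ncard ≤ Nat.card ι := by
  choose f hf using fun a : s => Set.mem_iUnion.1 (hsC a.2)
  have f_injective : Function.Injective f := fun a b hab =>
    Subtype.ext <| inter_subsingleton_of_isChain_of_isAntichain (hC (f a)) hs
      ⟨hf a, a.2⟩ ⟨hab ▸ hf b, b.2⟩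
  exact Nat.card_le_card_of_injective f f_injective

theorem isChain_setOf_mem_of_list_isChain [IsTrans α r] {l : List α} (hl : l.IsChain r) :
    IsChain r {a | a ∈ l} :=
  have : Std.Symm fun a b => r a b ∨ r b a := ⟨fun _ _ => Or.symm⟩
  (hl.pairwise.imp Or.inl).set_pairwise

end Antichain

theorem eq_of_sum_Iic_eq {α M : Type*} [PartialOrder α] [LocallyFiniteOrderBot α]
    [AddCancelCommMonoid M] {f g : α → M}
    (h : ∀ a, ∑ b ∈ Iic a, f b = ∑ b ∈ Iic a, g b) : f = g := by
  classical
  have : WellFoundedLT α :=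
    StrictMono.wellFoundedLT (f := fun a : α => #(Iic a)) fun _ _ hab =>
      card_lt_card (Iic_ssubset_Iic.2 hab)
  funext a
  induction a using WellFoundedLT.induction with
  | ind a ih =>
    have sum_Iio_eq : ∑ b ∈ Iio a, f b = ∑ b ∈ Iio a, g b :=
      sum_congr rfl fun b hb => ih b (mem_Iio.1 hb)
    have sum_Iic_eq := h a
    rw [← sum_Iio_add_eq_sum_Iic, ← sum_Iio_add_eq_sum_Iic, sum_Iio_eq] at sum_Iic_eq
    exact add_left_cancel sum_Iic_eq

section BruhatOrder

variable {m n : ℕ} {A C : Matrix (Fin m) (Fin n) ℕ} {D : Set (Matrix (Fin m) (Fin n) ℕ)}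

instance : IsTrans (Matrix (Fin m) (Fin n) ℕ) brle :=
  ⟨fun _ _ _ hAB hBC i j => (hBC i j).trans (hAB i j)⟩

instance : DecidableRel (brle (m := m) (n := n)) :=
  fun A C => inferInstanceAs (Decidable (∀ i j, sigmaM C i j ≤ sigmaM A i j))

theorem isAntichainB_iff_isAntichain : IsAntichainB D ↔ IsAntichain brle D :=
  ⟨fun h A hA C hC hne => (h A hA C hC hne).1,
    fun h _ hA _ hC hne => ⟨h hA hC hne, h hC hA hne.symm⟩⟩

theorem sigmaM_eq_sum_Iic (A : Matrix (Fin m) (Fin n) ℕ) (p : Fin m × Fin n) :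
    sigmaM A p.1 p.2 = ∑ q ∈ Iic p, A q.1 q.2 := by
  rw [← Iic_product_Iic p.1 p.2, sum_product]
  simp only [sigmaM, filter_ge_eq_Iic]

theorem sigmaM_injective : Function.Injective (sigmaM (m := m) (n := n)) := by
  intro A C h
  have uncurry_eq : (fun p : Fin m × Fin n => A p.1 p.2) = fun p => C p.1 p.2 :=
    eq_of_sum_Iic_eq fun p => by rw [← sigmaM_eq_sum_Iic, ← sigmaM_eq_sum_Iic, h]
  ext i j
  exact congrFun uncurry_eq (i, j)

/-- The total `∑ σ_ij(A)` of the leading partial sums, a strictly decreasing function for the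
Bruhat order; it plays the role of a rank function. -/
def sigmaTotal (A : Matrix (Fin m) (Fin n) ℕ) : ℕ :=
  ∑ p : Fin m × Fin n, sigmaM A p.1 p.2

theorem eq_of_brle_of_sigmaTotal_eq (hAC : brle A C) (h : sigmaTotal A = sigmaTotal C) :
    A = C := by
  have sigmaM_eq := (sum_eq_sum_iff_of_le fun p _ => hAC p.1 p.2).1 h.symm
  refine sigmaM_injective ?_
  funext i j
  exact (sigmaM_eq (i, j) (mem_univ _)).symm

theorem isAntichain_brle_of_sigmaTotal_eq {t : ℕ} (hD : ∀ A ∈ D, sigmaTotal A = t) :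
    IsAntichain brle D :=
  fun A hA C hC hne hAC => hne (eq_of_brle_of_sigmaTotal_eq hAC ((hD A hA).trans (hD C hC).symm))

end BruhatOrder

/-- The class `A(R,S)` as a computable `Finset`, built by choosing each row among the
(0,1)-vectors with the prescribed sum and then filtering by column sums. -/
def classFinset {m n : ℕ} (R : Fin m → ℕ) (S : Fin n → ℕ) : Finset (Matrix (Fin m) (Fin n) ℕ) :=
  {A ∈ Fintype.piFinset fun i => {v ∈ Fintype.piFinset fun _ => {0, 1} | ∑ j, v j = R i} |
    ∀ j, colSum A j = S j}

theorem mem_classFinset {m n : ℕ} {R : Fin m → ℕ} {S : Fin n → ℕ}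
    (A : Matrix (Fin m) (Fin n) ℕ) : A ∈ classFinset R S ↔ A ∈ classRS R S := by
  refine mem_filter.trans ((and_congr_left' Fintype.mem_piFinset).trans ?_)
  simp only [classRS, ZeroOne, rowSum, mem_filter, Fintype.mem_piFinset, mem_insert,
    mem_singleton, Set.mem_ofPred_eq, forall_and, and_assoc]

/-- The (0,1)-matrix whose row `i` is the `n`-digit binary expansion of `r i`, the leading digit
in column `0`. -/
def bitMatrix {m : ℕ} (n : ℕ) (r : Fin m → ℕ) : Matrix (Fin m) (Fin n) ℕ :=
  .of fun i j => ((r i).testBit j.rev).toNat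

/-- A partition of `A(4,2)` into `13` chains, each listed upwards in the Bruhat order. -/
def chainsA42 (c : Fin 13) : List (Matrix (Fin 4) (Fin 4) ℕ) :=
  List.map (bitMatrix 4) <|
    ![[![12, 12, 3, 3], ![12, 10, 5, 3], ![12, 10, 3, 5], ![12, 9, 3, 6], ![12, 5, 3, 10],
        ![12, 3, 5, 10], ![12, 3, 3, 12], ![10, 3, 5, 12], ![3, 10, 5, 12]],
      [![12, 9, 6, 3], ![12, 5, 10, 3], ![12, 3, 12, 3], ![12, 3, 10, 5], ![12, 3, 9, 6],
        ![6, 9, 9, 6], ![5, 10, 9, 6], ![5, 9, 10, 6], ![3, 9, 12, 6]],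
      [![12, 6, 9, 3], ![12, 6, 3, 9], ![12, 3, 6, 9], ![10, 5, 6, 9], ![9, 6, 6, 9],
        ![9, 6, 5, 10], ![9, 6, 3, 12], ![3, 9, 6, 12]],
      [![10, 12, 5, 3], ![10, 12, 3, 5], ![10, 10, 5, 5], ![10, 9, 6, 5], ![10, 9, 5, 6],
        ![10, 5, 9, 6], ![9, 6, 9, 6], ![9, 5, 10, 6], ![9, 5, 6, 10], ![5, 9, 6, 10],
        ![5, 5, 10, 10], ![5, 3, 12, 10], ![3, 5, 12, 10]],
      [![10, 6, 9, 5], ![10, 6, 5, 9], ![10, 5, 5, 10], ![10, 5, 3, 12], ![6, 9, 3, 12],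
        ![5, 10, 3, 12], ![3, 12, 3, 12]],
      [![10, 5, 12, 3], ![10, 5, 10, 5], ![10, 3, 12, 5], ![3, 10, 12, 5]],
      [![9, 12, 6, 3], ![9, 12, 3, 6], ![9, 10, 5, 6], ![9, 9, 6, 6], ![9, 3, 12, 6],
        ![9, 3, 6, 12], ![3, 3, 12, 12]],
      [![9, 10, 6, 5], ![9, 6, 10, 5], ![5, 10, 10, 5], ![5, 10, 6, 9], ![3, 12, 6, 9]],
      [![9, 6, 12, 3], ![5, 10, 12, 3], ![3, 12, 12, 3], ![3, 12, 10, 5], ![3, 12, 9, 6]],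
      [![6, 12, 9, 3], ![6, 12, 3, 9], ![6, 9, 6, 9], ![6, 9, 5, 10], ![6, 5, 9, 10],
        ![5, 6, 9, 10], ![3, 6, 9, 12]],
      [![6, 10, 9, 5], ![6, 10, 5, 9], ![6, 6, 9, 9], ![6, 3, 12, 9], ![6, 3, 9, 12],
        ![5, 3, 10, 12], ![3, 5, 10, 12]],
      [![6, 9, 12, 3], ![6, 9, 10, 5], ![6, 5, 10, 9], ![5, 6, 10, 9], ![3, 6, 12, 9]],
      [![5, 12, 10, 3], ![5, 12, 3, 10], ![5, 10, 5, 10], ![3, 12, 5, 10]]] c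

theorem isChain_chainsA42 (c : Fin 13) : (chainsA42 c).IsChain brle := by
  revert c
  decide +kernel

theorem classA42_subset_iUnion_chainsA42 : classA 4 2 ⊆ ⋃ c, {A | A ∈ chainsA42 c} := by
  have exists_mem : ∀ A ∈ classFinset (fun _ : Fin 4 => 2) (fun _ : Fin 4 => 2),
      ∃ c, A ∈ chainsA42 c := by
    decide +kernel
  exact fun A hA => Set.mem_iUnion.2 (exists_mem A ((mem_classFinset A).2 hA))

theorem ncard_classA42_sigmaTotal_eq : {A ∈ classA 4 2 | sigmaTotal A = 48}.ncard = 13 := by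
  have eq_coe_filter : {A ∈ classA 4 2 | sigmaTotal A = 48} =
      ({A ∈ classFinset (fun _ : Fin 4 => 2) (fun _ : Fin 4 => 2) | sigmaTotal A = 48} :
        Finset _) := by
    ext A
    simp only [classA, Set.mem_ofPred_eq, mem_coe, mem_filter, mem_classFinset]
  rw [eq_coe_filter, Set.ncard_coe_finset]
  decide +kernel

/-- The width of the Bruhat order of `A(4,2)` equals `13`:
there is an antichain of size `13`, and every antichain has size at most `13`. -/
theorem width_A42_eq_thirteen :
    (∃ D : Set (Matrix (Fin 4) (Fin 4) ℕ),
        D ⊆ classA 4 2 ∧ IsAntichainB D ∧ D.ncard = 13)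
    ∧ (∀ D : Set (Matrix (Fin 4) (Fin 4) ℕ),
        D ⊆ classA 4 2 → IsAntichainB D → D.ncard ≤ 13) := by
  constructor
  · refine ⟨{A ∈ classA 4 2 | sigmaTotal A = 48}, Set.sep_subset _ _, ?_,
      ncard_classA42_sigmaTotal_eq⟩
    exact isAntichainB_iff_isAntichain.2 (isAntichain_brle_of_sigmaTotal_eq fun _ hA => hA.2)
  · intro D hD hanti
    calc D.ncard ≤ Nat.card (Fin 13) :=
          ncard_le_card_of_isAntichain_of_subset_iUnion_isChain
            (isAntichainB_iff_isAntichain.1 hanti)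
            (fun c => isChain_setOf_mem_of_list_isChain (isChain_chainsA42 c))
            (hD.trans classA42_subset_iUnion_chainsA42)
      _ = 13 := Nat.card_fin 13
end
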